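/- Fix p ∈ (0,1) and c ∈ ℝ with |c| < 2√(p(1−p)), and set φ = arccos( c(1−2p) / (2√((1−c²)·p(1−p))) ) ∈ (0, π). Let a : ℕ → ℤ satisfy a_N/N → c. Then for all fixed integers u, v, the Krawtchouk kernel converges to the discrete sine kernel under the shift by N + a_N: lim_{N→∞} K^{kr}_{p, 2N−1, N}(N + a_N + u, N + a_N + v) = sin(φ(u−v))/(π(u−v)) when u ≠ v, and = φ/π when u = v. (Here for N large enough N + a_N + u and N + a_N + v lie in {0, 1, …, 2N−1}; for other N the kernel value is set to 0.) -/

import Mathlib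

open Filter
open scoped Nat Topology

noncomputable section

/-- The Krawtchouk polynomial of degree `m` on `{0,…,L}` with parameter `p`:
`K_m(x;p,L) = Σ_{k=0}^m (−1)^k·(m choose k)·(x choose k)·k!·((L−k)!/L!)·p^{−k}`. -/
def krawtchouk (p : ℝ) (L m x : ℕ) : ℝ :=
  ∑ k ∈ Finset.range (m + 1),
    (-1 : ℝ) ^ k * (m.choose k : ℝ) * (x.choose k : ℝ) * (k ! : ℝ) *
      (((L - k)! : ℝ) / (L ! : ℝ)) / p ^ k

/-- The normalized Krawtchouk function
`K̃_m(x;p,L) = (W_{p,L}(x))^{1/2}·(L choose m)^{1/2}·(p/(1−p))^{m/2}·K_m(x;p,L)`,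
where `W_{p,L}(x) = (L choose x)·p^x·(1−p)^{L−x}` is the binomial weight. -/
def normalizedKrawtchouk (p : ℝ) (L m x : ℕ) : ℝ :=
  Real.sqrt ((L.choose x : ℝ) * p ^ x * (1 - p) ^ (L - x)) *
    Real.sqrt (L.choose m : ℝ) * Real.sqrt ((p / (1 - p)) ^ m) * krawtchouk p L m x

/-- The `N`-particle Krawtchouk kernel
`K^{kr}_{p,L,N}(x,y) = Σ_{m=0}^{N−1} K̃_m(x;p,L)·K̃_m(y;p,L)`. -/
def krawtchoukKernel (p : ℝ) (L N : ℕ) (x y : ℕ) : ℝ :=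
  ∑ m ∈ Finset.range N, normalizedKrawtchouk p L m x * normalizedKrawtchouk p L m y

lemma kr_choose_succ (x k : ℕ) :
    ((x.choose (k+1) : ℕ) : ℝ) * (k+1) = (x.choose k : ℝ) * ((x:ℝ) - k) := by
  have h := Nat.choose_succ_right_eq x k
  rcases le_or_gt k x with hk | hk
  · have h2 : ((x.choose (k+1) * (k+1) : ℕ):ℝ) = ((x.choose k * (x - k) : ℕ) : ℝ) := by rw [h]
    push_cast [Nat.cast_sub hk] at h2
    exact h2
  · rw [Nat.choose_eq_zero_of_lt hk, Nat.choose_eq_zero_of_lt (by omega)]; simp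

lemma kr_choose_pred (x k : ℕ) :
    (x:ℝ) * ((x.choose k : ℝ) - ((x-1).choose k : ℝ)) = k * (x.choose k : ℝ) := by
  cases x with
  | zero => cases k <;> simp
  | succ y =>
    cases k with
    | zero => simp
    | succ k =>
      have h1 : (((y+1).choose (k+1) : ℕ):ℝ) = (y.choose k : ℝ) + (y.choose (k+1) : ℝ) := by
        rw [Nat.choose_succ_succ]; push_cast; ring
      have h2 : (((y+1) * y.choose k : ℕ) : ℝ) = (((y+1).choose (k+1) * (k+1) : ℕ):ℝ) := by
        rw [Nat.add_one_mul_choose_eq]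
      push_cast at h2
      simp only [Nat.add_sub_cancel]
      push_cast
      rw [mul_comm ((k:ℝ)+1), ← h2, h1]; ring

def krC (p : ℝ) (L m k : ℕ) : ℝ :=
  (-1 : ℝ) ^ k * (m.choose k : ℝ) * (k ! : ℝ) * (((L - k)! : ℝ) / (L ! : ℝ)) / p ^ k

lemma krC_succ (p : ℝ) (hp : 0 < p) (L m k : ℕ) (hk : k < L) :
    p * ((L:ℝ) - k) * krC p L m (k+1) = - ((m:ℝ) - k) * krC p L m k := by
  unfold krC
  have h1 := kr_choose_succ m k
  have h2 : ((L - k)! : ℝ) = ((L:ℝ) - k) * ((L - (k+1))! : ℝ) := by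
    have : L - k = (L - (k+1)) + 1 := by omega
    rw [this, Nat.factorial_succ]
    push_cast [Nat.cast_sub (show k+1 ≤ L by omega)]; ring
  rw [h2, Nat.factorial_succ]
  push_cast
  have hL : (L ! : ℝ) ≠ 0 := by positivity
  field_simp
  rw [pow_succ (-1:ℝ), pow_succ p]
  have h3 : (m.choose (k+1) : ℝ) * ((k:ℝ)+1) * ((L:ℝ)-k) = (m.choose k : ℝ) * ((m:ℝ)-k) * ((L:ℝ)-k) := by rw [h1]
  linear_combination (-(-1:ℝ)^k * p^k * p) * h3

lemma kr_eq (p : ℝ) (L m x : ℕ) :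
    krawtchouk p L m x = ∑ k ∈ Finset.range (m+1), krC p L m k * (x.choose k : ℝ) := by
  unfold krawtchouk krC
  refine Finset.sum_congr rfl fun k _ => by ring

lemma kr_partial (p : ℝ) (hp : 0 < p) (L m x : ℕ) (hm : m ≤ L) (n : ℕ) (hn : n ≤ m) :
    ∑ k ∈ Finset.range (n+1), krC p L m k *
      (p * ((L:ℝ) - x) * (((x+1).choose k : ℝ) - (x.choose k : ℝ))
        - (1-p) * ((x:ℝ) * ((x.choose k : ℝ) - ((x-1).choose k : ℝ))) + m * (x.choose k : ℝ))
      = ((m:ℝ) - n) * krC p L m n * (x.choose n : ℝ) := by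
  induction n with
  | zero => simp; ring
  | succ n ih =>
    rw [Finset.sum_range_succ, ih (by omega), kr_choose_pred]
    have h1 := krC_succ p hp L m n (by omega)
    have h2 := kr_choose_succ x n
    have h3 : (((x+1).choose (n+1) : ℕ):ℝ) = (x.choose n : ℝ) + (x.choose (n+1) : ℝ) := by
      rw [Nat.choose_succ_succ]; push_cast; ring
    rw [h3]
    push_cast
    linear_combination (x.choose n : ℝ) * h1 + p * krC p L m (n+1) * h2

lemma kr_rec (p : ℝ) (hp : 0 < p) (L m x : ℕ) (hm : m ≤ L) :
    (m:ℝ) * krawtchouk p L m x = - (p * ((L:ℝ) - x)) * krawtchouk p L m (x+1)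
      + (p * ((L:ℝ) - x) + (1-p) * x) * krawtchouk p L m x
      - (1-p) * x * krawtchouk p L m (x-1) := by
  have h := kr_partial p hp L m x hm m le_rfl
  rw [sub_self, zero_mul, zero_mul] at h
  have : ∑ k ∈ Finset.range (m+1), krC p L m k *
      (p * ((L:ℝ) - x) * (((x+1).choose k : ℝ) - (x.choose k : ℝ))
        - (1-p) * ((x:ℝ) * ((x.choose k : ℝ) - ((x-1).choose k : ℝ))) + m * (x.choose k : ℝ))
      = p * ((L:ℝ) - x) * (krawtchouk p L m (x+1) - krawtchouk p L m x)
        - (1-p) * ((x:ℝ) * (krawtchouk p L m x - krawtchouk p L m (x-1))) + m * krawtchouk p L m x := by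
    simp only [kr_eq, mul_sub, Finset.mul_sum, ← Finset.sum_sub_distrib, ← Finset.sum_add_distrib]
    refine Finset.sum_congr rfl fun k _ => by ring
  rw [this] at h
  linear_combination h

lemma kr_symm (p : ℝ) (L m x : ℕ) : krawtchouk p L m x = krawtchouk p L x m := by
  have key : ∀ m x M : ℕ, m ≤ M → krawtchouk p L m x = ∑ k ∈ Finset.range (M + 1),
    (-1 : ℝ) ^ k * (m.choose k : ℝ) * (x.choose k : ℝ) * (k ! : ℝ) *
      (((L - k)! : ℝ) / (L ! : ℝ)) / p ^ k := by
    intro m x M h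
    unfold krawtchouk
    refine Finset.sum_subset (Finset.range_mono (by omega)) ?_
    intro k _ hk
    rw [Nat.choose_eq_zero_of_lt (by simpa using hk)]
    simp
  rw [key m x (max m x) (le_max_left _ _), key x m (max m x) (le_max_right _ _)]
  refine Finset.sum_congr rfl fun k _ => by ring

def krB (p : ℝ) (L : ℕ) (x : ℕ) : ℝ := - Real.sqrt (p * (1-p) * (((L:ℝ) + 1 - x) * x))
def krA (p : ℝ) (L : ℕ) (x : ℕ) : ℝ := p * ((L:ℝ) - x) + (1-p) * x

lemma krW_succ (p : ℝ) (hp : 0 < p) (hp1 : p < 1) (L x : ℕ) (hx : x < L) :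
    krB p L (x+1) * Real.sqrt ((L.choose (x+1) : ℝ) * p ^ (x+1) * (1 - p) ^ (L - (x+1)))
      = - (p * ((L:ℝ) - x)) * Real.sqrt ((L.choose x : ℝ) * p ^ x * (1 - p) ^ (L - x)) ∧
    krB p L (x+1) * Real.sqrt ((L.choose x : ℝ) * p ^ x * (1 - p) ^ (L - x))
      = - ((1-p) * ((x:ℝ)+1)) * Real.sqrt ((L.choose (x+1) : ℝ) * p ^ (x+1) * (1 - p) ^ (L - (x+1))) := by
  have hq : 0 < 1 - p := by linarith
  have hLx : (0:ℝ) < (L:ℝ) - x := by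
    have : (x:ℝ) < L := by exact_mod_cast hx
    linarith
  have h1 := kr_choose_succ L x
  have h2 : L - x = (L - (x+1)) + 1 := by omega
  have e1 : (L:ℝ) + 1 - ((x+1 : ℕ):ℝ) = (L:ℝ) - x := by push_cast; ring
  unfold krB
  rw [e1]
  push_cast
  constructor
  · rw [neg_mul, neg_mul, ← Real.sqrt_mul (by positivity)]
    rw [← Real.sqrt_sq (show 0 ≤ p * ((L:ℝ) - x) by positivity), ← Real.sqrt_mul (by positivity)]
    congr 2
    rw [h2, pow_succ (1-p), pow_succ p]
    linear_combination (p * (1-p) * ((L:ℝ)-x) * p^x * p * (1-p)^(L-(x+1))) * h1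
  · rw [neg_mul, neg_mul, ← Real.sqrt_mul (by positivity)]
    rw [← Real.sqrt_sq (show 0 ≤ (1-p) * ((x:ℝ) + 1) by positivity), ← Real.sqrt_mul (by positivity)]
    congr 2
    rw [h2, pow_succ (1-p), pow_succ p]
    linear_combination (-(p * (1-p)^2 * ((x:ℝ)+1) * p^x * (1-p)^(L-(x+1)))) * h1

lemma krU_rec (p : ℝ) (hp : 0 < p) (hp1 : p < 1) (L m x : ℕ) (hm : m ≤ L) (hx : x ≤ L) :
    (m:ℝ) * normalizedKrawtchouk p L m x = krB p L (x+1) * normalizedKrawtchouk p L m (x+1)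
      + krA p L x * normalizedKrawtchouk p L m x
      + krB p L x * normalizedKrawtchouk p L m (x-1) := by
  have h := kr_rec p hp L m x hm
  have a1 : krB p L (x+1) * Real.sqrt ((L.choose (x+1) : ℝ) * p ^ (x+1) * (1 - p) ^ (L - (x+1)))
      = - (p * ((L:ℝ) - x)) * Real.sqrt ((L.choose x : ℝ) * p ^ x * (1 - p) ^ (L - x)) := by
    rcases hx.lt_or_eq with hx | rfl
    · exact (krW_succ p hp hp1 L x hx).1
    · simp
  have a2 : krB p L x * Real.sqrt ((L.choose (x-1) : ℝ) * p ^ (x-1) * (1 - p) ^ (L - (x-1)))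
      = - ((1-p) * x) * Real.sqrt ((L.choose x : ℝ) * p ^ x * (1 - p) ^ (L - x)) := by
    cases x with
    | zero => simp [krB]
    | succ y => simpa using (krW_succ p hp hp1 L y (by omega)).2
  unfold normalizedKrawtchouk krA
  set s := Real.sqrt (L.choose m : ℝ) * Real.sqrt ((p / (1 - p)) ^ m) with hs
  set w := Real.sqrt ((L.choose x : ℝ) * p ^ x * (1 - p) ^ (L - x))
  linear_combination w * s * h - (s * krawtchouk p L m (x+1)) * a1 - (s * krawtchouk p L m (x-1)) * a2

lemma krU_symm (p : ℝ) (hp : 0 < p) (hp1 : p < 1) (L m x : ℕ) (hm : m ≤ L) (hx : x ≤ L) :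
    normalizedKrawtchouk p L m x = normalizedKrawtchouk p L x m := by
  have hq : 0 < 1 - p := by linarith
  have key : ∀ m x : ℕ, m ≤ L → x ≤ L → Real.sqrt ((L.choose x : ℝ) * p ^ x * (1 - p) ^ (L - x)) *
    Real.sqrt (L.choose m : ℝ) * Real.sqrt ((p / (1 - p)) ^ m)
     = Real.sqrt ((L.choose x : ℝ) * (L.choose m : ℝ) * ((1-p)^L * (p/(1-p))^(x+m))) := by
    intro m x hm hx
    rw [← Real.sqrt_mul (by positivity), ← Real.sqrt_mul (by positivity)]
    congr 1
    have : (1-p)^L = (1-p)^(L-x) * (1-p)^x := by rw [← pow_add]; congr 1; omega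
    rw [this, pow_add, div_pow, div_pow]
    field_simp
  unfold normalizedKrawtchouk
  rw [key m x hm hx, key x m hx hm, kr_symm, add_comm x m, mul_comm (L.choose x : ℝ)]

lemma kr_orth (p : ℝ) (hp : 0 < p) (hp1 : p < 1) (L x y : ℕ) (hx : x ≤ L) (hy : y ≤ L) (hxy : x ≠ y) :
    ∑ m ∈ Finset.range (L+1), normalizedKrawtchouk p L m x * normalizedKrawtchouk p L m y = 0 := by
  have part : ∀ n ≤ L, ((x:ℝ) - y) * ∑ m ∈ Finset.range (n+1), normalizedKrawtchouk p L x m * normalizedKrawtchouk p L y m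
     = krB p L (n+1) * (normalizedKrawtchouk p L x (n+1) * normalizedKrawtchouk p L y n
        - normalizedKrawtchouk p L x n * normalizedKrawtchouk p L y (n+1)) := by
    intro n
    induction n with
    | zero =>
      intro _
      have h1 := krU_rec p hp hp1 L x 0 hx (by omega)
      have h2 := krU_rec p hp hp1 L y 0 hy (by omega)
      have h0 : krB p L 0 = 0 := by simp [krB]
      rw [h0] at h1 h2
      simp only [zero_add, Finset.sum_range_one] at *
      linear_combination normalizedKrawtchouk p L y 0 * h1 - normalizedKrawtchouk p L x 0 * h2
    | succ n ih =>
      intro hn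
      rw [Finset.sum_range_succ, mul_add, ih (by omega)]
      have h1 := krU_rec p hp hp1 L x (n+1) hx (by omega)
      have h2 := krU_rec p hp hp1 L y (n+1) hy (by omega)
      simp only [Nat.add_sub_cancel] at h1 h2
      linear_combination normalizedKrawtchouk p L y (n+1) * h1 - normalizedKrawtchouk p L x (n+1) * h2
  have h := part L le_rfl
  have hB : krB p L (L+1) = 0 := by simp [krB]
  rw [hB, zero_mul] at h
  have hne : (x:ℝ) - y ≠ 0 := sub_ne_zero.mpr (by exact_mod_cast hxy)
  rw [← (mul_eq_zero.mp h).resolve_left hne]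
  refine Finset.sum_congr rfl fun m hm => ?_
  have : m ≤ L := by simpa [Nat.lt_succ_iff] using hm
  rw [krU_symm p hp hp1 L m x this hx, krU_symm p hp hp1 L m y this hy]

lemma kr_norm (p : ℝ) (hp : 0 < p) (hp1 : p < 1) (L x : ℕ) (hx : x ≤ L) :
    ∑ m ∈ Finset.range (L+1), normalizedKrawtchouk p L m x * normalizedKrawtchouk p L m x = 1 := by
  have hq : 0 < 1 - p := by linarith
  induction x with
  | zero =>
    have : ∀ m ∈ Finset.range (L+1), normalizedKrawtchouk p L m 0 * normalizedKrawtchouk p L m 0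
      = p ^ m * (1-p)^(L-m) * (L.choose m : ℝ) := by
      intro m hm
      have hm : m ≤ L := by simpa [Nat.lt_succ_iff] using hm
      rw [krU_symm p hp hp1 L m 0 hm hx]
      unfold normalizedKrawtchouk krawtchouk
      have : (L ! : ℝ) ≠ 0 := by positivity
      simp only [Nat.choose_zero_right, zero_add, Finset.sum_range_one, pow_zero, Nat.cast_one, Real.sqrt_one,
        Nat.factorial_zero, mul_one, Nat.sub_zero, div_self this, div_one]
      rw [Real.mul_self_sqrt (by positivity)]; ring
    rw [Finset.sum_congr rfl this, ← add_pow]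
    simp
  | succ x ih =>
    rw [← ih (by omega)]
    set S : ℕ → ℕ → ℝ := fun x y => ∑ m ∈ Finset.range (L+1), normalizedKrawtchouk p L m x * normalizedKrawtchouk p L m y with hS
    have hrec : ∀ x y, x ≤ L → ∑ m ∈ Finset.range (L+1), (m:ℝ) * normalizedKrawtchouk p L m x * normalizedKrawtchouk p L m y
        = krB p L (x+1) * S (x+1) y + krA p L x * S x y + krB p L x * S (x-1) y := by
      intro x y hx
      simp only [hS, Finset.mul_sum, ← Finset.sum_add_distrib]
      refine Finset.sum_congr rfl fun m hm => ?_
      have hm : m ≤ L := by simpa [Nat.lt_succ_iff] using hm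
      rw [krU_rec p hp hp1 L m x hm hx]; ring
    have hcomm : ∑ m ∈ Finset.range (L+1), (m:ℝ) * normalizedKrawtchouk p L m x * normalizedKrawtchouk p L m (x+1)
       = ∑ m ∈ Finset.range (L+1), (m:ℝ) * normalizedKrawtchouk p L m (x+1) * normalizedKrawtchouk p L m x :=
      Finset.sum_congr rfl fun m _ => by ring
    rw [hrec x _ (by omega), hrec (x+1) _ hx] at hcomm
    have o1 : S x (x+1) = 0 := kr_orth p hp hp1 L _ _ (by omega) hx (by omega)
    have o2 : S (x+1) x = 0 := kr_orth p hp hp1 L _ _ hx (by omega) (by omega)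
    have o3 : krB p L x * S (x-1) (x+1) = 0 := by
      cases x with
      | zero => simp [krB]
      | succ y => 
        have : S y (y+1+1) = 0 := kr_orth p hp hp1 L _ _ (by omega) hx (by omega)
        simp [this]
    have o4 : krB p L (x+1+1) * S (x+1+1) x = 0 := by
      rcases hx.lt_or_eq with h | h
      · have : S (x+1+1) x = 0 := kr_orth p hp hp1 L _ _ (by omega) (by omega) (by omega)
        simp [this]
      · rw [h]; simp [krB]
    rw [o1, o2, o3, o4] at hcomm
    have hb : krB p L (x+1) ≠ 0 := by
      have : (x:ℝ) + 1 ≤ L := by exact_mod_cast hx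
      unfold krB
      have h3 : (0:ℝ) < (L:ℝ) + 1 - ((x+1:ℕ):ℝ) := by push_cast; linarith
      exact neg_ne_zero.mpr (Real.sqrt_ne_zero'.mpr (by positivity))
    simp only [Nat.add_sub_cancel] at hcomm
    refine mul_left_cancel₀ hb ?_
    change krB p L (x+1) * S (x+1) (x+1) = krB p L (x+1) * S x x
    linarith

def krI (A B d : ℝ) (f : ℝ → ℝ) : ℝ :=
  (1 / Real.pi) * ∫ θ in (0:ℝ)..Real.pi, f (A - 2 * B * Real.cos θ) * Real.cos (d * θ)

def krLam (V : ℕ → ℤ → ℕ → ℝ) (N : ℕ) (u v : ℤ) (f : ℝ → ℝ) : ℝ :=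
  ∑ m ∈ Finset.range (2 * N), V N u m * V N v m * f ((m : ℝ) / N)

lemma krI_one (A B : ℝ) (d : ℤ) : krI A B d (fun _ => 1) = if d = 0 then 1 else 0 := by
  unfold krI
  split_ifs with h
  · subst h; simp [Real.pi_ne_zero]
  · have hd : (d:ℝ) ≠ 0 := by exact_mod_cast h
    simp only [one_mul]
    rw [intervalIntegral.integral_comp_mul_left (f := Real.cos) hd]
    simp [Real.sin_int_mul_pi]

lemma krI_add (A B d : ℝ) (f g : ℝ → ℝ) (hf : Continuous f) (hg : Continuous g) :
    krI A B d (fun x => f x + g x) = krI A B d f + krI A B d g := by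
  unfold krI
  rw [← mul_add, ← intervalIntegral.integral_add]
  · simp only [add_mul]
  · exact Continuous.intervalIntegrable (by fun_prop) _ _
  · exact Continuous.intervalIntegrable (by fun_prop) _ _

lemma krI_smul (A B d r : ℝ) (f : ℝ → ℝ) :
    krI A B d (fun x => r * f x) = r * krI A B d f := by
  unfold krI
  simp only [mul_assoc, intervalIntegral.integral_const_mul]
  ring

lemma krI_rec (A B d : ℝ) (f : ℝ → ℝ) (hf : Continuous f) :
    krI A B d (fun x => x * f x) = -B * krI A B (d+1) f + A * krI A B d f + -B * krI A B (d-1) f := by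
  unfold krI
  have h : ∀ θ : ℝ, (A - 2 * B * Real.cos θ) * f (A - 2 * B * Real.cos θ) * Real.cos (d * θ)
    = -B * (f (A - 2 * B * Real.cos θ) * Real.cos ((d+1) * θ)) + A * (f (A - 2 * B * Real.cos θ) * Real.cos (d * θ))
      + -B * (f (A - 2 * B * Real.cos θ) * Real.cos ((d-1) * θ)) := by
    intro θ
    rw [add_mul d 1 θ, sub_mul d 1 θ, one_mul, Real.cos_add, Real.cos_sub]; ring
  simp only [h]
  rw [intervalIntegral.integral_add, intervalIntegral.integral_add, intervalIntegral.integral_const_mul,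
    intervalIntegral.integral_const_mul, intervalIntegral.integral_const_mul]
  · ring
  all_goals exact Continuous.intervalIntegrable (by fun_prop) _ _

structure KrHyp (V : ℕ → ℤ → ℕ → ℝ) (A B : ℝ) : Prop where
  orth : ∀ u v : ℤ, ∀ᶠ N in atTop, ∑ m ∈ Finset.range (2 * N), V N u m * V N v m = if u = v then 1 else 0
  recur : ∃ (b1 a b2 : ℕ → ℤ → ℝ), (∀ u, ∀ᶠ N : ℕ in atTop, ∀ m ∈ Finset.range (2 * N),
      ((m:ℝ) / N) * V N u m = b1 N u * V N (u+1) m + a N u * V N u m + b2 N u * V N (u-1) m) ∧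
      (∀ u, Tendsto (fun N => b1 N u) atTop (𝓝 (-B))) ∧ (∀ u, Tendsto (fun N => a N u) atTop (𝓝 A)) ∧
      (∀ u, Tendsto (fun N => b2 N u) atTop (𝓝 (-B)))

lemma kr_moment {V : ℕ → ℤ → ℕ → ℝ} {A B : ℝ} (H : KrHyp V A B) (k : ℕ) (u v : ℤ) :
    Tendsto (fun N => krLam V N u v (fun x => x ^ k)) atTop (𝓝 (krI A B ((u:ℝ) - v) (fun x => x ^ k))) := by
  induction k generalizing u with
  | zero =>
    simp only [pow_zero]
    have h1 := krI_one A B (u - v)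
    push_cast at h1
    rw [h1]
    simp only [sub_eq_zero]
    refine tendsto_const_nhds.congr' ?_
    filter_upwards [H.orth u v] with N hN
    simp only [krLam, mul_one, hN]
  | succ k ih =>
    obtain ⟨b1, a, b2, hr, t1, t2, t3⟩ := H.recur
    have e : (fun x : ℝ => x ^ (k+1)) = fun x => x * x ^ k := by funext x; ring
    rw [e, krI_rec A B _ _ (by fun_prop)]
    have T := (((t1 u).mul (ih (u+1))).add ((t2 u).mul (ih u))).add ((t3 u).mul (ih (u-1)))
    have e1 : (((u+1 : ℤ):ℝ) - v) = (u:ℝ) - v + 1 := by push_cast; ring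
    have e2 : (((u-1 : ℤ):ℝ) - v) = (u:ℝ) - v - 1 := by push_cast; ring
    rw [e1, e2] at T
    refine T.congr' ?_
    filter_upwards [hr u] with N hN
    simp only [krLam, Finset.mul_sum, ← Finset.sum_add_distrib]
    refine Finset.sum_congr rfl fun m hm => ?_
    have := hN m hm
    linear_combination (-V N v m * ((m:ℝ)/N)^k) * this

lemma krLam_add (V : ℕ → ℤ → ℕ → ℝ) (N : ℕ) (u v : ℤ) (f g : ℝ → ℝ) :
    krLam V N u v (fun x => f x + g x) = krLam V N u v f + krLam V N u v g := by
  simp only [krLam, ← Finset.sum_add_distrib, mul_add]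

lemma krLam_smul (V : ℕ → ℤ → ℕ → ℝ) (N : ℕ) (u v : ℤ) (r : ℝ) (f : ℝ → ℝ) :
    krLam V N u v (fun x => r * f x) = r * krLam V N u v f := by
  simp only [krLam, Finset.mul_sum]
  exact Finset.sum_congr rfl fun m _ => by ring

lemma kr_poly {V : ℕ → ℤ → ℕ → ℝ} {A B : ℝ} (H : KrHyp V A B) (u v : ℤ) (P : Polynomial ℝ) :
    Tendsto (fun N => krLam V N u v (fun x => P.eval x)) atTop
      (𝓝 (krI A B ((u:ℝ) - v) (fun x => P.eval x))) := by
  induction P using Polynomial.induction_on' with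
  | add p q hp hq =>
    simp only [Polynomial.eval_add]
    rw [krI_add A B _ _ _ p.continuous q.continuous]
    simp only [krLam_add]
    exact hp.add hq
  | monomial n r =>
    simp only [Polynomial.eval_monomial]
    rw [krI_smul]
    simp only [krLam_smul]
    exact (kr_moment H n u v).const_mul r

lemma kr_approx (F : ℕ → ℝ) (f : ℝ)
    (h : ∀ ε > 0, ∃ (G : ℕ → ℝ) (g : ℝ), Tendsto G atTop (𝓝 g) ∧ (∀ᶠ N in atTop, |F N - G N| ≤ ε) ∧ |f - g| ≤ ε) :
    Tendsto F atTop (𝓝 f) := by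
  rw [Metric.tendsto_nhds]
  intro ε hε
  obtain ⟨G, g, hG, hFG, hfg⟩ := h (ε/4) (by positivity)
  filter_upwards [hFG, Metric.tendsto_nhds.mp hG (ε/4) (by positivity)] with N h1 h2
  rw [Real.dist_eq] at *
  rw [abs_le] at h1 hfg
  rw [abs_lt] at *
  constructor <;> linarith

lemma krLam_le (V : ℕ → ℤ → ℕ → ℝ) (N : ℕ) (u v : ℤ) (f g h : ℝ → ℝ)
    (hfg : ∀ m ∈ Finset.range (2*N), |f ((m:ℝ)/N) - g ((m:ℝ)/N)| ≤ h ((m:ℝ)/N)) :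
    |krLam V N u v f - krLam V N u v g| ≤ (krLam V N u u h + krLam V N v v h) / 2 := by
  simp only [krLam, ← Finset.sum_sub_distrib, ← Finset.sum_add_distrib, Finset.sum_div]
  refine (Finset.abs_sum_le_sum_abs _ _).trans (Finset.sum_le_sum fun m hm => ?_)
  have h1 := hfg m hm
  rw [← mul_sub, abs_mul]
  have h2 : |V N u m * V N v m| ≤ (V N u m * V N u m + V N v m * V N v m) / 2 := by
    rw [abs_le]; constructor
    · nlinarith [sq_nonneg (V N u m + V N v m)]
    · nlinarith [sq_nonneg (V N u m - V N v m)]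
  calc _ ≤ (V N u m * V N u m + V N v m * V N v m) / 2 * h ((m:ℝ)/N) :=
        mul_le_mul h2 h1 (abs_nonneg _) ((abs_nonneg _).trans h2)
    _ = _ := by ring

lemma kr_cont {V : ℕ → ℤ → ℕ → ℝ} {A B : ℝ} (H : KrHyp V A B) (u v : ℤ) (f : ℝ → ℝ) (hf : Continuous f) :
    Tendsto (fun N => krLam V N u v f) atTop (𝓝 (krI A B ((u:ℝ) - v) f)) := by
  refine kr_approx _ _ fun ε hε => ?_
  set R := 2 + |A| + 2 * |B| with hR
  obtain ⟨P, hP⟩ := exists_polynomial_near_of_continuousOn (-R) R f hf.continuousOn ε hε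
  refine ⟨_, _, kr_poly H u v P, ?_, ?_⟩
  · filter_upwards [H.orth u u, H.orth v v, eventually_gt_atTop 0] with N h1 h2 hN
    have := krLam_le V N u v f (fun x => P.eval x) (fun _ => ε) (by
      intro m hm
      rw [abs_sub_comm]
      refine (hP _ ⟨?_, ?_⟩).le
      · have : (0:ℝ) ≤ (m:ℝ)/N := by positivity
        have := abs_nonneg A
        have := abs_nonneg B
        linarith
      · have hN' : (0:ℝ) < N := by exact_mod_cast hN
        have hm : (m:ℝ) ≤ 2 * N := by exact_mod_cast (Finset.mem_range.mp hm).le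
        have : (m:ℝ)/N ≤ 2 := by rw [div_le_iff₀ hN']; exact hm
        have := abs_nonneg A
        have := abs_nonneg B
        linarith)
    refine this.trans (le_of_eq ?_)
    simp only [krLam, ← Finset.sum_mul, h1, h2]
    simp
  · unfold krI
    rw [← mul_sub, ← intervalIntegral.integral_sub]
    · rw [abs_mul, abs_of_pos (by positivity)]
      have : ‖∫ θ in (0:ℝ)..Real.pi, (f (A - 2 * B * Real.cos θ) * Real.cos (((u:ℝ)-v) * θ) -
          P.eval (A - 2 * B * Real.cos θ) * Real.cos (((u:ℝ)-v) * θ))‖ ≤ ε * |Real.pi - 0| := by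
        refine intervalIntegral.norm_integral_le_of_norm_le_const fun θ _ => ?_
        rw [← sub_mul, norm_mul]
        have hb : |2 * B * Real.cos θ| ≤ 2 * |B| := by
          rw [abs_mul, abs_mul, abs_two]
          have := Real.abs_cos_le_one θ
          nlinarith [abs_nonneg B]
        have h1 := hP (A - 2 * B * Real.cos θ) (by
          rw [abs_le] at hb
          have := neg_abs_le A
          have := le_abs_self A
          constructor <;> linarith [hb.1, hb.2])
        rw [abs_sub_comm] at h1
        calc _ ≤ ε * 1 := mul_le_mul h1.le (Real.abs_cos_le_one _) (abs_nonneg _) hε.le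
          _ = ε := mul_one ε
      rw [sub_zero, abs_of_pos Real.pi_pos] at this
      rw [div_mul_eq_mul_div, one_mul, div_le_iff₀ Real.pi_pos]
      exact this
    · exact Continuous.intervalIntegrable (by fun_prop) _ _
    · exact Continuous.intervalIntegrable (by have := P.continuous; fun_prop) _ _

def krStep (x : ℝ) : ℝ := if x < 1 then 1 else 0
def krF (n : ℕ) (x : ℝ) : ℝ := max 0 (min 1 (((n:ℝ)+1) * (1 - x)))
def krH (n : ℕ) (x : ℝ) : ℝ := max 0 (1 - ((n:ℝ)+1) * |1 - x|)

lemma krF_cont (n : ℕ) : Continuous (krF n) := by unfold krF; fun_prop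
lemma krH_cont (n : ℕ) : Continuous (krH n) := by unfold krH; fun_prop

lemma kr_step_le (n : ℕ) (x : ℝ) : |krStep x - krF n x| ≤ krH n x := by
  unfold krStep krF krH
  have hn : (0:ℝ) < (n:ℝ) + 1 := by positivity
  split_ifs with h
  · rw [abs_of_pos (show 0 < 1 - x by linarith)]
    have : 0 < ((n:ℝ)+1) * (1-x) := mul_pos hn (by linarith)
    rw [max_eq_right (le_min zero_le_one this.le)]
    rcases le_total 1 (((n:ℝ)+1) * (1-x)) with h1 | h1
    · rw [min_eq_left h1]; simp
    · rw [min_eq_right h1, abs_of_nonneg (by linarith)]; exact le_max_right _ _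
  · have : ((n:ℝ)+1) * (1-x) ≤ 0 := mul_nonpos_of_nonneg_of_nonpos hn.le (by linarith)
    rw [min_eq_right (by linarith), max_eq_left this]; simp

lemma krH_lim (A B : ℝ) (hB : 0 < B) : Tendsto (fun n => krI A B 0 (krH n)) atTop (𝓝 0) := by
  unfold krI
  suffices hs : Tendsto (fun n : ℕ => ∫ θ in (0:ℝ)..Real.pi, krH n (A - 2 * B * Real.cos θ) * Real.cos (0 * θ)) atTop
      (𝓝 (∫ θ in (0:ℝ)..Real.pi, (0:ℝ))) by
    simpa using hs.const_mul (1 / Real.pi)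
  refine intervalIntegral.tendsto_integral_filter_of_dominated_convergence (fun _ => 1) ?_ ?_ ?_ ?_
  · refine Eventually.of_forall fun n => ?_
    have := krH_cont n
    exact Continuous.aestronglyMeasurable (by fun_prop)
  · refine Eventually.of_forall fun n => Eventually.of_forall fun θ _ => ?_
    simp only [zero_mul, Real.cos_zero, mul_one, krH]
    rw [Real.norm_of_nonneg (le_max_left _ _)]
    refine max_le zero_le_one ?_
    have : 0 ≤ ((n:ℝ)+1) * |1 - (A - 2 * B * Real.cos θ)| := by positivity
    linarith
  · exact intervalIntegrable_const
  · have hnull : ∀ᵐ θ : ℝ, θ ≠ Real.arccos ((A-1)/(2*B)) := by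
      simp [MeasureTheory.ae_iff]
    filter_upwards [hnull] with θ hθ hm
    rw [Set.uIoc_of_le Real.pi_pos.le] at hm
    have hne : 1 - (A - 2 * B * Real.cos θ) ≠ 0 := by
      intro h0
      apply hθ
      have : (A-1)/(2*B) = Real.cos θ := by field_simp; linarith
      rw [this, Real.arccos_cos hm.1.le hm.2]
    have hpos : 0 < |1 - (A - 2 * B * Real.cos θ)| := abs_pos.mpr hne
    refine tendsto_const_nhds.congr' ?_
    have ht : Tendsto (fun n : ℕ => ((n:ℝ)+1) * |1 - (A - 2 * B * Real.cos θ)|) atTop atTop :=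
      (tendsto_natCast_atTop_atTop.atTop_add tendsto_const_nhds).atTop_mul_const hpos
    filter_upwards [ht.eventually_ge_atTop 1] with n hn
    simp only [krH]
    rw [max_eq_left (by linarith)]; simp

lemma krStep_meas : Measurable krStep := by
  unfold krStep
  exact Measurable.ite measurableSet_Iio measurable_const measurable_const

lemma krStep_int (A B d : ℝ) (a b : ℝ) :
    IntervalIntegrable (fun θ => krStep (A - 2 * B * Real.cos θ) * Real.cos (d * θ)) MeasureTheory.volume a b := by
  have h1 : IntervalIntegrable (fun _ : ℝ => (1:ℝ)) MeasureTheory.volume a b := intervalIntegrable_const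
  refine h1.mono_fun ?_ ?_
  · have := krStep_meas
    have h2 : Measurable fun θ : ℝ => A - 2 * B * Real.cos θ := by fun_prop
    have h3 : Measurable fun θ : ℝ => Real.cos (d * θ) := by fun_prop
    exact ((this.comp h2).mul h3).aestronglyMeasurable
  · refine Eventually.of_forall fun θ => ?_
    simp only [norm_mul, norm_one]
    have : ‖krStep (A - 2 * B * Real.cos θ)‖ ≤ 1 := by
      unfold krStep; split_ifs <;> simp
    calc _ ≤ (1:ℝ) * 1 := mul_le_mul this (Real.abs_cos_le_one _) (abs_nonneg _) zero_le_one
      _ = 1 := mul_one 1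

lemma kr_step_lim {V : ℕ → ℤ → ℕ → ℝ} {A B : ℝ} (hB : 0 < B) (H : KrHyp V A B) (u v : ℤ) :
    Tendsto (fun N => krLam V N u v krStep) atTop (𝓝 (krI A B ((u:ℝ) - v) krStep)) := by
  refine kr_approx _ _ fun ε hε => ?_
  obtain ⟨n, hn⟩ := ((krH_lim A B hB).eventually_lt_const hε).exists
  refine ⟨_, _, kr_cont H u v (krF n) (krF_cont n), ?_, ?_⟩
  · have t1 := kr_cont H u u (krH n) (krH_cont n)
    have t2 := kr_cont H v v (krH n) (krH_cont n)
    rw [sub_self] at t1 t2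
    filter_upwards [t1.eventually_lt_const hn, t2.eventually_lt_const hn] with N h1 h2
    refine (krLam_le V N u v _ _ (krH n) fun m _ => kr_step_le n _).trans ?_
    linarith
  · refine le_trans ?_ hn.le
    unfold krI
    have c1 := krF_cont n
    have c2 := krH_cont n
    rw [← mul_sub, ← intervalIntegral.integral_sub (krStep_int _ _ _ _ _) (Continuous.intervalIntegrable (by fun_prop) _ _),
      abs_mul, abs_of_pos (by positivity)]
    refine mul_le_mul_of_nonneg_left ?_ (by positivity)
    refine intervalIntegral.norm_integral_le_of_norm_le (f := fun θ => krStep (A - 2 * B * Real.cos θ) * Real.cos (((u:ℝ)-v) * θ) - krF n (A - 2 * B * Real.cos θ) * Real.cos (((u:ℝ)-v) * θ)) Real.pi_pos.le ?_ (Continuous.intervalIntegrable (by fun_prop) _ _)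
    refine Eventually.of_forall fun θ _ => ?_
    rw [← sub_mul, norm_mul]
    simp only [zero_mul, Real.cos_zero]
    exact mul_le_mul (kr_step_le n _) (Real.abs_cos_le_one _) (abs_nonneg _) (le_max_left _ _)

lemma krI_step (A B : ℝ) (hB : 0 < B) (d : ℝ) (t : ℝ) (ht : t = (A-1)/(2*B)) :
    krI A B d krStep = if d = 0 then Real.arccos t / Real.pi else
      Real.sin (Real.arccos t * d) / (Real.pi * d) := by
  unfold krI
  set b := Real.arccos t with hb
  have h0 : 0 ≤ b := Real.arccos_nonneg t
  have h1 : b ≤ Real.pi := Real.arccos_le_pi t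
  rw [← intervalIntegral.integral_add_adjacent_intervals (b := b) (krStep_int _ _ _ _ _) (krStep_int _ _ _ _ _)]
  have hlt : ∀ θ, (A - 2 * B * Real.cos θ < 1 ↔ t < Real.cos θ) := by
    intro θ
    rw [ht, div_lt_iff₀ (by positivity)]
    constructor <;> intro h <;> linarith
  have e1 : ∫ θ in (0:ℝ)..b, krStep (A - 2 * B * Real.cos θ) * Real.cos (d * θ) = ∫ θ in (0:ℝ)..b, Real.cos (d * θ) := by
    refine intervalIntegral.integral_congr_Ioo_of_le h0 fun θ hθ => ?_
    have : t < Real.cos θ := by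
      by_contra hcon
      push Not at hcon
      have := Real.arccos_le_arccos hcon
      rw [Real.arccos_cos hθ.1.le (hθ.2.le.trans h1)] at this
      linarith [hθ.2]
    simp only [krStep, (hlt θ).mpr this, if_true, one_mul]
  have e2 : ∫ θ in b..Real.pi, krStep (A - 2 * B * Real.cos θ) * Real.cos (d * θ) = ∫ θ in b..Real.pi, (0:ℝ) := by
    refine intervalIntegral.integral_congr_Ioo_of_le h1 fun θ hθ => ?_
    have : ¬ t < Real.cos θ := by
      intro hcon
      have := Real.arccos_le_arccos hcon.le
      rw [Real.arccos_cos (h0.trans hθ.1.le) hθ.2.le] at this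
      linarith [hθ.1]
    simp only [krStep, (hlt θ), this, if_false, zero_mul]
  rw [e1, e2]
  split_ifs with hd
  · subst hd; simp; ring
  · rw [intervalIntegral.integral_comp_mul_left (f := Real.cos) hd]
    simp
    rw [mul_comm d b]
    field_simp

lemma kr_c_lt (p c : ℝ) (hp : p ∈ Set.Ioo (0 : ℝ) 1) (hc : |c| < 2 * Real.sqrt (p * (1 - p))) : |c| < 1 := by
  have hp1 : 0 < 1 - p := by linarith [hp.2]
  have h1 : Real.sqrt (p * (1-p)) ≤ 1/2 := by
    rw [Real.sqrt_le_left (by norm_num)]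
    nlinarith [sq_nonneg (p - 1/2)]
  linarith

lemma kr_ratio (c : ℝ) (a : ℕ → ℤ) (ha : Tendsto (fun N : ℕ => (a N : ℝ) / (N : ℝ)) atTop (𝓝 c)) (r : ℝ) :
    Tendsto (fun N : ℕ => ((N:ℝ) + a N + r) / N) atTop (𝓝 (1 + c)) := by
  have h0 : Tendsto (fun N : ℕ => r / (N:ℝ)) atTop (𝓝 0) := tendsto_const_div_atTop_nhds_zero_nat r
  have h := (ha.const_add 1).add h0
  rw [add_zero] at h
  refine h.congr' ?_
  filter_upwards [eventually_gt_atTop 0] with N hN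
  have hN' : (N:ℝ) ≠ 0 := by positivity
  field_simp

lemma kr_range (c : ℝ) (hc : |c| < 1) (a : ℕ → ℤ)
    (ha : Tendsto (fun N : ℕ => (a N : ℝ) / (N : ℝ)) atTop (𝓝 c)) (u : ℤ) :
    ∀ᶠ N : ℕ in atTop, 1 ≤ (N:ℤ) + a N + u ∧ (N:ℤ) + a N + u ≤ 2 * (N:ℤ) - 2 := by
  rw [abs_lt] at hc
  have h1 := kr_ratio c a ha u
  have h2 := kr_ratio c a ha (u + 1)
  filter_upwards [h1.eventually_const_lt (show 0 < 1 + c by linarith),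
    h2.eventually_lt_const (show 1 + c < 2 by linarith), eventually_gt_atTop 0] with N e1 e2 hN
  have hN' : (0:ℝ) < N := by exact_mod_cast hN
  rw [lt_div_iff₀ hN', zero_mul] at e1
  rw [div_lt_iff₀ hN'] at e2
  have e1' : 0 < (N:ℤ) + a N + u := by exact_mod_cast e1
  have e2' : (N:ℤ) + a N + (u + 1) < 2 * N := by exact_mod_cast e2
  omega

def krV (p : ℝ) (a : ℕ → ℤ) (N : ℕ) (u : ℤ) (m : ℕ) : ℝ :=
  normalizedKrawtchouk p (2 * N - 1) m ((N : ℤ) + a N + u).toNat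

lemma krB_lim (p c : ℝ) (x : ℕ → ℕ)
    (hx : Tendsto (fun N : ℕ => (x N : ℝ) / N) atTop (𝓝 (1 + c))) :
    Tendsto (fun N : ℕ => krB p (2 * N - 1) (x N) / N) atTop (𝓝 (-Real.sqrt ((1 - c ^ 2) * p * (1 - p)))) := by
  have h1 : Tendsto (fun N : ℕ => -Real.sqrt (p * (1-p) * ((2 - (x N : ℝ)/N) * ((x N : ℝ)/N)))) atTop
      (𝓝 (-Real.sqrt (p * (1-p) * ((2 - (1+c)) * (1+c))))) :=
    (((hx.const_sub 2).mul hx).const_mul _).sqrt.neg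
  rw [show (1 - c ^ 2) * p * (1 - p) = p * (1-p) * ((2 - (1+c)) * (1+c)) by ring]
  refine h1.congr' ?_
  filter_upwards [eventually_gt_atTop 0] with N hN
  have hN' : (0:ℝ) < N := by exact_mod_cast hN
  unfold krB
  rw [neg_div]
  congr 1
  rw [eq_div_iff hN'.ne']
  nth_rewrite 3 [← Real.sqrt_sq hN'.le]
  rw [← Real.sqrt_mul' _ (by positivity)]
  congr 1
  rw [Nat.cast_sub (by omega)]
  push_cast
  field_simp
  ring

lemma krA_lim (p c : ℝ) (x : ℕ → ℕ)
    (hx : Tendsto (fun N : ℕ => (x N : ℝ) / N) atTop (𝓝 (1 + c))) :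
    Tendsto (fun N : ℕ => krA p (2 * N - 1) (x N) / N) atTop (𝓝 (1 + c * (1 - 2 * p))) := by
  have h0 : Tendsto (fun N : ℕ => (1:ℝ) / (N:ℝ)) atTop (𝓝 0) := tendsto_const_div_atTop_nhds_zero_nat 1
  have h1 : Tendsto (fun N : ℕ => p * (2 - (1:ℝ)/N - (x N : ℝ)/N) + (1-p) * ((x N : ℝ)/N)) atTop
      (𝓝 (p * (2 - 0 - (1+c)) + (1-p) * (1+c))) :=
    (((h0.const_sub 2).sub hx).const_mul p).add (hx.const_mul (1-p))
  rw [show 1 + c * (1 - 2 * p) = p * (2 - 0 - (1+c)) + (1-p) * (1+c) by ring]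
  refine h1.congr' ?_
  filter_upwards [eventually_gt_atTop 0] with N hN
  have hN' : (0:ℝ) < N := by exact_mod_cast hN
  unfold krA
  rw [Nat.cast_sub (by omega)]
  push_cast
  field_simp

lemma kr_hyp (p c : ℝ) (hp : p ∈ Set.Ioo (0 : ℝ) 1) (hc : |c| < 1) (a : ℕ → ℤ)
    (ha : Tendsto (fun N : ℕ => (a N : ℝ) / (N : ℝ)) atTop (𝓝 c)) :
    KrHyp (krV p a) (1 + c * (1 - 2 * p)) (Real.sqrt ((1 - c ^ 2) * p * (1 - p))) := by
  have hx : ∀ u : ℤ, Tendsto (fun N : ℕ => ((((N : ℤ) + a N + u).toNat : ℕ) : ℝ) / N) atTop (𝓝 (1 + c)) := by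
    intro u
    refine (kr_ratio c a ha u).congr' ?_
    filter_upwards [kr_range c hc a ha u] with N hN
    have : (((((N : ℤ) + a N + u).toNat : ℕ) : ℤ) : ℝ) = (((N : ℤ) + a N + u : ℤ) : ℝ) := by
      rw [Int.toNat_of_nonneg (by omega)]
    push_cast at this
    rw [this]
  constructor
  · intro u v
    filter_upwards [kr_range c hc a ha u, kr_range c hc a ha v, eventually_gt_atTop 0] with N h1 h2 hN
    simp only [krV]
    have e : 2 * N = (2 * N - 1) + 1 := by omega
    have hs : Finset.range (2 * N) = Finset.range (2 * N - 1 + 1) := by rw [← e]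
    rw [hs]
    split_ifs with h
    · subst h
      exact kr_norm p hp.1 hp.2 _ _ (by omega)
    · exact kr_orth p hp.1 hp.2 _ _ _ (by omega) (by omega) (by omega)
  · refine ⟨fun N u => krB p (2 * N - 1) ((N : ℤ) + a N + (u+1)).toNat / N,
      fun N u => krA p (2 * N - 1) ((N : ℤ) + a N + u).toNat / N,
      fun N u => krB p (2 * N - 1) ((N : ℤ) + a N + u).toNat / N, ?_, ?_, ?_, ?_⟩
    · intro u
      filter_upwards [kr_range c hc a ha u, eventually_gt_atTop 0] with N h1 hN m hm
      have hm := Finset.mem_range.mp hm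
      have h := krU_rec p hp.1 hp.2 (2 * N - 1) m ((N : ℤ) + a N + u).toNat (by omega) (by omega)
      have e1 : ((N : ℤ) + a N + u).toNat + 1 = ((N : ℤ) + a N + (u + 1)).toNat := by omega
      have e2 : ((N : ℤ) + a N + u).toNat - 1 = ((N : ℤ) + a N + (u - 1)).toNat := by omega
      rw [e1, e2] at h
      simp only [krV]
      linear_combination h / N
    · exact fun u => krB_lim p c _ (hx (u+1))
    · exact fun u => krA_lim p c _ (hx u)
    · exact fun u => krB_lim p c _ (hx u)

/-- Bulk limit of the Krawtchouk ensemble: for `p ∈ (0,1)`, `|c| < 2√(p(1−p))`,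
`φ = arccos( c(1−2p) / (2√((1−c²)·p·(1−p))) ) ∈ (0,π)`, and `a_N/N → c`, for all fixed
integers `u, v` the Krawtchouk kernel `K^{kr}_{p,2N−1,N}`, shifted by `N + a_N`, converges
to the discrete sine kernel: the limit is `sin(φ(u−v))/(π(u−v))` for `u ≠ v` and `φ/π` for
`u = v` (the kernel value being set to `0` for those `N` for which the shifted arguments
do not lie in `{0,…,2N−1}`). -/
theorem krawtchoukKernel_tendsto_discreteSineKernel
    (p c : ℝ) (hp : p ∈ Set.Ioo (0 : ℝ) 1) (hc : |c| < 2 * Real.sqrt (p * (1 - p)))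
    (a : ℕ → ℤ) (ha : Tendsto (fun N : ℕ => (a N : ℝ) / (N : ℝ)) atTop (𝓝 c))
    (u v : ℤ) :
    Real.arccos (c * (1 - 2 * p) / (2 * Real.sqrt ((1 - c ^ 2) * p * (1 - p))))
        ∈ Set.Ioo 0 Real.pi
    ∧ Tendsto
        (fun N : ℕ =>
          if 0 ≤ (N : ℤ) + a N + u ∧ (N : ℤ) + a N + u ≤ 2 * (N : ℤ) - 1
              ∧ 0 ≤ (N : ℤ) + a N + v ∧ (N : ℤ) + a N + v ≤ 2 * (N : ℤ) - 1 then
            krawtchoukKernel p (2 * N - 1) N ((N : ℤ) + a N + u).toNat ((N : ℤ) + a N + v).toNat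
          else 0)
        atTop
        (𝓝 (if u = v then
              Real.arccos (c * (1 - 2 * p) / (2 * Real.sqrt ((1 - c ^ 2) * p * (1 - p))))
                / Real.pi
            else
              Real.sin (Real.arccos (c * (1 - 2 * p) /
                    (2 * Real.sqrt ((1 - c ^ 2) * p * (1 - p)))) * ((u : ℝ) - (v : ℝ)))
                / (Real.pi * ((u : ℝ) - (v : ℝ))))) := by
  have hc1 : |c| < 1 := kr_c_lt p c hp hc
  have hp1 : 0 < 1 - p := by linarith [hp.2]
  have hc2 : 0 < 1 - c ^ 2 := by
    have := (sq_lt_one_iff_abs_lt_one c).mpr hc1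
    linarith
  have hB : 0 < Real.sqrt ((1 - c ^ 2) * p * (1 - p)) :=
    Real.sqrt_pos.mpr (mul_pos (mul_pos hc2 hp.1) hp1)
  refine ⟨?_, ?_⟩
  · have hlt : |c * (1 - 2 * p) / (2 * Real.sqrt ((1 - c ^ 2) * p * (1 - p)))| < 1 := by
      rw [← sq_lt_one_iff_abs_lt_one, div_pow, div_lt_one (by positivity), mul_pow, mul_pow,
        Real.sq_sqrt (mul_pos (mul_pos hc2 hp.1) hp1).le]
      have : c ^ 2 < 4 * (p * (1 - p)) := by
        have h := pow_lt_pow_left₀ hc (abs_nonneg c) two_ne_zero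
        rw [sq_abs, mul_pow, Real.sq_sqrt (mul_pos hp.1 hp1).le] at h
        linarith
      nlinarith
    rw [abs_lt] at hlt
    refine ⟨Real.arccos_pos.mpr hlt.2, lt_of_le_of_ne (Real.arccos_le_pi _) fun h => ?_⟩
    have := Real.arccos_eq_pi.mp h
    linarith [hlt.1]
  · have key := kr_step_lim hB (kr_hyp p c hp hc1 a ha) u v
    rw [krI_step _ _ hB _ _ (show c * (1 - 2 * p) / (2 * Real.sqrt ((1 - c ^ 2) * p * (1 - p)))
      = (1 + c * (1 - 2 * p) - 1) / (2 * Real.sqrt ((1 - c ^ 2) * p * (1 - p))) by ring_nf)] at key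
    have huv : ((u:ℝ) - v = 0) ↔ u = v := by rw [sub_eq_zero]; exact_mod_cast Iff.rfl
    simp only [huv] at key
    refine key.congr' ?_
    filter_upwards [kr_range c hc1 a ha u, kr_range c hc1 a ha v, eventually_gt_atTop 0] with N h1 h2 hN
    rw [if_pos ⟨by omega, by omega, by omega, by omega⟩]
    unfold krLam krawtchoukKernel
    have hN' : (0:ℝ) < N := by exact_mod_cast hN
    symm
    have hsub : Finset.range N ⊆ Finset.range (2 * N) := Finset.range_mono (by omega)
    rw [← Finset.sum_subset hsub]
    · refine Finset.sum_congr rfl fun m hm => ?_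
      have : (m:ℝ) / N < 1 := by
        rw [div_lt_one hN']; exact_mod_cast Finset.mem_range.mp hm
      simp only [krV, krStep, this, if_true, mul_one]
    · intro m _ hm
      have : ¬ (m:ℝ) / N < 1 := by
        rw [div_lt_one hN']; simpa using hm
      simp only [krStep, this, if_false, mul_zero]

end
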